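/- Let Ω ⊂ ℝ² be a bounded Wiener regular open set with Green function g and harmonic measure ω. Suppose B̄ is a closed ball centered at ∂Ω such that Cap_L((1/4)B̄ \ Ω) ≥ c₁ · Cap_L(B̄). Then g(z,y) ≤ C(c₁) · ω^z(8B̄) for all z ∈ Ω \ 2B̄ and y ∈ (1/5)B̄ ∩ Ω. -/

import Mathlib

open MeasureTheory Metric
open scoped ENNReal Classical

/-- The logarithmic energy `∬ log(1/|x-y|) dμ dμ` (positive part minus negative part). -/
noncomputable def logEnergy (μ : Measure (EuclideanSpace ℝ (Fin 2))) : EReal :=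
  ((∫⁻ p : EuclideanSpace ℝ (Fin 2) × EuclideanSpace ℝ (Fin 2),
      (if p.1 = p.2 then ⊤ else ENNReal.ofReal (Real.log (1 / dist p.1 p.2)))
      ∂(μ.prod μ) : ℝ≥0∞) : EReal)
  - ((∫⁻ p : EuclideanSpace ℝ (Fin 2) × EuclideanSpace ℝ (Fin 2),
      ENNReal.ofReal (Real.log (dist p.1 p.2)) ∂(μ.prod μ) : ℝ≥0∞) : EReal)

/-- Robin constant `V(F) = inf_{μ ∈ M₁(F)} ∬ log(1/|x-y|) dμ dμ = 2π / Cap₀(F)`. -/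
noncomputable def wienerV (F : Set (EuclideanSpace ℝ (Fin 2))) : EReal :=
  ⨅ (μ : Measure (EuclideanSpace ℝ (Fin 2))) (_ : IsProbabilityMeasure μ) (_ : μ Fᶜ = 0),
    logEnergy μ

/-- Logarithmic capacity `Cap_L(F) = exp(−2π/Cap₀(F)) = exp(−V(F))`. -/
noncomputable def logCap (F : Set (EuclideanSpace ℝ (Fin 2))) : ℝ :=
  if wienerV F = ⊤ then 0 else Real.exp (-(wienerV F).toReal)

/-- A continuous function is harmonic on an open set iff it satisfies the mean value
property over balls; we take this as the definition of harmonicity. -/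
def HarmonicOnSet (f : EuclideanSpace ℝ (Fin 2) → ℝ) (U : Set (EuclideanSpace ℝ (Fin 2))) :
    Prop :=
  ContinuousOn f U ∧
    ∀ z ∈ U, ∀ ρ > (0 : ℝ), closedBall z ρ ⊆ U →
      f z = (volume (ball z ρ)).toReal⁻¹ * ∫ y in ball z ρ, f y

/-- `ω` is the harmonic measure of the bounded open set `Ω`, and `Ω` is Wiener regular:
for `z ∈ Ω`, `ω z` is a probability measure on `∂Ω`, and for every continuous `f` the
harmonic extension `z ↦ ∫ f dω^z` is harmonic in `Ω` and attains the boundary values `f`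
continuously at every boundary point. -/
def IsHarmonicMeasureOfWienerRegular (Ω : Set (EuclideanSpace ℝ (Fin 2)))
    (ω : EuclideanSpace ℝ (Fin 2) → Measure (EuclideanSpace ℝ (Fin 2))) : Prop :=
  (∀ z ∈ Ω, IsProbabilityMeasure (ω z)) ∧
  (∀ z ∈ Ω, ω z (frontier Ω)ᶜ = 0) ∧
  (∀ f : EuclideanSpace ℝ (Fin 2) → ℝ, Continuous f →
    HarmonicOnSet (fun z => ∫ ξ, f ξ ∂(ω z)) Ω ∧
    ∀ ξ₀ ∈ frontier Ω, Filter.Tendsto (fun z => ∫ ξ, f ξ ∂(ω z))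
      (nhdsWithin ξ₀ Ω) (nhds (f ξ₀)))

/-- The fundamental solution `𝓔₂(x-y) = (1/2π) log(1/|x-y|)` of `-Δ` in `ℝ²`. -/
noncomputable def fund (x y : EuclideanSpace ℝ (Fin 2)) : ℝ :=
  (1 / (2 * Real.pi)) * Real.log (1 / dist x y)

/-- The Green function of `Ω`, expressed via harmonic measure:
`g(z,y) = 𝓔₂(z−y) − ∫ 𝓔₂(ξ−y) dω^z(ξ)`. -/
noncomputable def green (ω : EuclideanSpace ℝ (Fin 2) → Measure (EuclideanSpace ℝ (Fin 2)))
    (z y : EuclideanSpace ℝ (Fin 2)) : ℝ :=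
  fund z y - ∫ ξ, fund ξ y ∂(ω z)

/-!
Write `B` for the closed ball of radius `R` about `x₀`. A capacity lower bound for a subset of
`B \ Ω` yields a probability measure of small logarithmic energy on it; conditioning that measure
on the set where its potential is at most twice the average gives a measure with bounded potential.
Its logarithmic potential `p` is harmonic in `Ω`, bounded below, and comparable to
`log |z - x₀|` away from `B`. Comparing `p` with the solutions of two Dirichlet problems,
for boundary data `log |ξ - y|` and for a cutoff equal to `1` on `7B` and to `0` off `8B`, bounds
`g(·, y)` above and `ω(8B)` below on the sphere of radius `2R`. The maximum principle in `Ω \ 2B`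
then propagates the inequality between the two.
-/

section PolarCoordinates

variable {F : Type*} [NormedAddCommGroup F] [NormedSpace ℝ F]

open Real in
lemma circleAverage_eq_integral_neg_pi_pi (f : ℂ → F) (c : ℂ) (r : ℝ) :
    circleAverage f c r = (2 * π)⁻¹ • ∫ θ in -π..π, f (circleMap c r θ) := by
  have hper : Function.Periodic (fun θ ↦ f (circleMap c r θ)) (2 * π) := fun θ ↦ by
    simp only [periodic_circleMap c r θ]
  have hshift := hper.intervalIntegral_add_eq 0 (-π)
  rw [zero_add, show -π + 2 * π = π by ring] at hshift
  rw [circleAverage_def, hshift]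

lemma add_polarCoord_symm (c : ℂ) (p : ℝ × ℝ) :
    c + Complex.polarCoord.symm p = circleMap c p.1 p.2 := by
  simp [circleMap, Complex.polarCoord_symm_apply, Complex.exp_mul_I]

open Real in
lemma integrableOn_smul_circleMap {f : ℂ → F} {c : ℂ} {R : ℝ}
    (hf : ContinuousOn f (closedBall c R)) :
    IntegrableOn (fun p : ℝ × ℝ ↦ p.1 • f (circleMap c p.1 p.2))
      (Set.Ioo 0 R ×ˢ Set.Ioo (-π) π) := by
  refine IntegrableOn.mono_set (ContinuousOn.integrableOn_compact
    (isCompact_Icc.prod isCompact_Icc) (continuousOn_fst.smul (hf.comp ?_ ?_)))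
    (Set.prod_mono Set.Ioo_subset_Icc_self Set.Ioo_subset_Icc_self)
  · unfold circleMap
    fun_prop
  · rintro p ⟨⟨hr, hrR⟩, -⟩
    simpa [circleMap, abs_of_nonneg hr] using hrR

open Real in
lemma setIntegral_ball_eq_integral_circleMap {f : ℂ → F} {c : ℂ} {R : ℝ}
    (hf : ContinuousOn f (closedBall c R)) :
    ∫ z in ball c R, f z =
      ∫ r in Set.Ioo 0 R, ∫ θ in Set.Ioo (-π) π, r • f (circleMap c r θ) := by
  have hball : ∀ p ∈ polarCoord.target,
      (c + Complex.polarCoord.symm p ∈ ball c R ↔ p ∈ Set.Ioo 0 R ×ˢ Set.Ioo (-π) π) := by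
    rintro ⟨r, θ⟩ ⟨hr, hθ⟩
    have hr : 0 < r := hr
    simp [abs_of_pos hr, hr, hθ.1, hθ.2]
  have hint := integrableOn_smul_circleMap hf
  rw [Measure.volume_eq_prod] at hint
  calc ∫ z in ball c R, f z
      = ∫ w, (ball c R).indicator f (c + w) := by
        rw [integral_add_left_eq_self, integral_indicator measurableSet_ball]
    _ = ∫ p in polarCoord.target,
          (Set.Ioo 0 R ×ˢ Set.Ioo (-π) π).indicator
            (fun p : ℝ × ℝ ↦ p.1 • f (circleMap c p.1 p.2)) p := by
        rw [← Complex.integral_comp_polarCoord_symm]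
        refine setIntegral_congr_fun polarCoord.open_target.measurableSet fun p hp ↦ ?_
        by_cases h : c + Complex.polarCoord.symm p ∈ ball c R
        · rw [Set.indicator_of_mem h, Set.indicator_of_mem ((hball p hp).1 h),
            add_polarCoord_symm]
        · rw [Set.indicator_of_notMem h, Set.indicator_of_notMem (mt (hball p hp).2 h),
            smul_zero]
    _ = ∫ p in Set.Ioo 0 R ×ˢ Set.Ioo (-π) π, p.1 • f (circleMap c p.1 p.2) := by
        rw [setIntegral_indicator (measurableSet_Ioo.prod measurableSet_Ioo), polarCoord_target,
          Set.inter_eq_right.2 (Set.prod_mono Set.Ioo_subset_Ioi_self subset_rfl)]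
    _ = _ := by rw [Measure.volume_eq_prod, setIntegral_prod _ hint]

open Real in
lemma setIntegral_ball_eq_integral_circleAverage {f : ℂ → F} {c : ℂ} {R : ℝ}
    (hf : ContinuousOn f (closedBall c R)) :
    ∫ z in ball c R, f z = ∫ r in Set.Ioo 0 R, (2 * π * r) • circleAverage f c r := by
  rw [setIntegral_ball_eq_integral_circleMap hf]
  refine setIntegral_congr_fun measurableSet_Ioo fun _ _ ↦ ?_
  rw [integral_smul, ← integral_Ioc_eq_integral_Ioo,
    ← intervalIntegral.integral_of_le (by linarith [pi_pos]), circleAverage_eq_integral_neg_pi_pi,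
    smul_smul, mul_right_comm, mul_inv_cancel₀ (by positivity), one_mul]

lemma setIntegral_ball_eq_of_circleAverage_eq [CompleteSpace F] {f : ℂ → F} {c : ℂ} {R : ℝ}
    (hf : ContinuousOn f (closedBall c R))
    (hmean : ∀ r ∈ Set.Ioo 0 R, Real.circleAverage f c r = f c) :
    ∫ z in ball c R, f z = volume.real (ball c R) • f c := by
  rw [← setIntegral_const, setIntegral_ball_eq_integral_circleAverage hf,
    setIntegral_ball_eq_integral_circleAverage continuousOn_const]
  refine setIntegral_congr_fun measurableSet_Ioo fun r hr ↦ ?_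
  simp only [hmean r hr, Real.circleAverage_const]

lemma setIntegral_ball_of_harmonicOnNhd [CompleteSpace F] {f : ℂ → F} {c : ℂ} {R : ℝ}
    (hf : InnerProductSpace.HarmonicOnNhd f (closedBall c R)) :
    ∫ z in ball c R, f z = volume.real (ball c R) • f c :=
  setIntegral_ball_eq_of_circleAverage_eq hf.continuousOn fun _ hr ↦
    (hf.mono (closedBall_subset_closedBall
      ((abs_of_pos hr.1).trans_le hr.2.le))).circleAverage_eq

end PolarCoordinates

local notation "E2" => EuclideanSpace ℝ (Fin 2)

lemma setIntegral_ball_log_dist {x z : E2} {r : ℝ} (h : x ∉ closedBall z r) :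
    ∫ w in ball z r, Real.log (dist w x) = volume.real (ball z r) * Real.log (dist z x) := by
  set e : ℂ ≃ₗᵢ[ℝ] E2 := Complex.orthonormalBasisOneI.repr
  have hpre : e ⁻¹' ball z r = ball (e.symm z) r := e.preimage_ball z r
  have hlog : ∀ w, Real.log (dist (e w) x) = Real.log ‖w - e.symm x‖ := fun w ↦ by
    rw [← e.apply_symm_apply x, e.dist_map, e.symm_apply_apply, dist_eq_norm]
  have hharm : InnerProductSpace.HarmonicOnNhd (fun w : ℂ ↦ Real.log ‖w - e.symm x‖)
      (closedBall (e.symm z) r) := fun w hw ↦ by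
    refine AnalyticAt.harmonicAt_log_norm (by fun_prop) (sub_ne_zero.2 ?_)
    rintro rfl
    exact h (by simpa using hw)
  rw [← e.measurePreserving.setIntegral_preimage_emb e.toHomeomorph.measurableEmbedding,
    ← e.measurePreserving.measureReal_preimage measurableSet_ball.nullMeasurableSet, hpre]
  simp only [hlog]
  rw [setIntegral_ball_of_harmonicOnNhd hharm, smul_eq_mul, ← hlog, e.apply_symm_apply]

open Filter Topology in
lemma isCompact_sublevel_of_eventually_lt {X : Type*} [PseudoMetricSpace X] [ProperSpace X]
    {W : Set X} {v : X → ℝ} {c : ℝ} (hW : Bornology.IsBounded W) (hv : ContinuousOn v W)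
    (hc : ∀ ξ ∈ frontier W, ∀ᶠ z in 𝓝[W] ξ, c < v z) : IsCompact {w ∈ W | v w ≤ c} := by
  refine isCompact_of_isClosed_isBounded (isClosed_of_closure_subset fun ξ hξ ↦ ?_)
    (hW.subset fun _ h ↦ h.1)
  have hfreq : ∃ᶠ w in 𝓝[W] ξ, v w ≤ c := by
    rw [frequently_nhdsWithin_iff]
    exact (mem_closure_iff_frequently.1 hξ).mono fun w hw ↦ ⟨hw.2, hw.1⟩
  have hξW : ξ ∈ W := by
    by_contra hξW
    have hfront : ξ ∈ frontier W :=
      ⟨closure_mono (fun _ h ↦ h.1) hξ, fun h ↦ hξW (interior_subset h)⟩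
    exact hfreq ((hc ξ hfront).mono fun _ h ↦ h.not_ge)
  exact ⟨hξW, le_of_tendsto_of_frequently (hv ξ hξW) hfreq⟩

namespace HarmonicOnSet

open Filter Topology

variable {f g u v : E2 → ℝ} {U V W : Set E2} {z : E2} {r : ℝ}

lemma mono (hf : HarmonicOnSet f U) (h : V ⊆ U) : HarmonicOnSet f V :=
  ⟨hf.1.mono h, fun z hz ρ hρ hball ↦ hf.2 z (h hz) ρ hρ (hball.trans h)⟩

lemma integrableOn_ball (hf : HarmonicOnSet f U) (h : closedBall z r ⊆ U) :
    IntegrableOn f (ball z r) :=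
  ((hf.1.mono h).integrableOn_compact (isCompact_closedBall z r)).mono_set ball_subset_closedBall

lemma setIntegral_ball (hf : HarmonicOnSet f U) (hr : 0 < r) (h : closedBall z r ⊆ U) :
    ∫ w in ball z r, f w = volume.real (ball z r) * f z := by
  have hvol : 0 < volume.real (ball z r) :=
    ENNReal.toReal_pos (measure_ball_pos _ _ hr).ne' measure_ball_lt_top.ne
  rw [hf.2 z (h (mem_closedBall_self hr.le)) r hr h]
  exact (mul_inv_cancel_left₀ hvol.ne' _).symm

lemma of_setIntegral_ball (hf : ContinuousOn f U)
    (hmean : ∀ z r, 0 < r → closedBall z r ⊆ U →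
      ∫ w in ball z r, f w = volume.real (ball z r) * f z) : HarmonicOnSet f U := by
  refine ⟨hf, fun z _ r hr h ↦ ?_⟩
  have hvol : 0 < volume.real (ball z r) :=
    ENNReal.toReal_pos (measure_ball_pos _ _ hr).ne' measure_ball_lt_top.ne
  rw [hmean z r hr h]
  exact (inv_mul_cancel_left₀ hvol.ne' _).symm

lemma congr (hf : HarmonicOnSet f U) (hgf : Set.EqOn g f U) : HarmonicOnSet g U :=
  of_setIntegral_ball (hf.1.congr hgf) fun z r hr h ↦ by
    rw [hgf (h (mem_closedBall_self hr.le)), ← hf.setIntegral_ball hr h]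
    exact setIntegral_congr_fun measurableSet_ball (hgf.mono (ball_subset_closedBall.trans h))

lemma const (c : ℝ) : HarmonicOnSet (fun _ ↦ c) U :=
  of_setIntegral_ball continuousOn_const fun _ _ _ _ ↦ by rw [setIntegral_const, smul_eq_mul]

lemma const_mul (c : ℝ) (hf : HarmonicOnSet f U) : HarmonicOnSet (fun z ↦ c * f z) U :=
  of_setIntegral_ball (hf.1.const_mul c) fun z r hr h ↦ by
    rw [integral_const_mul, hf.setIntegral_ball hr h, mul_left_comm]

lemma add (hf : HarmonicOnSet f U) (hg : HarmonicOnSet g U) :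
    HarmonicOnSet (fun z ↦ f z + g z) U :=
  of_setIntegral_ball (hf.1.add hg.1) fun z r hr h ↦ by
    rw [integral_add (hf.integrableOn_ball h) (hg.integrableOn_ball h), hf.setIntegral_ball hr h,
      hg.setIntegral_ball hr h, mul_add]

lemma sub (hf : HarmonicOnSet f U) (hg : HarmonicOnSet g U) :
    HarmonicOnSet (fun z ↦ f z - g z) U :=
  of_setIntegral_ball (hf.1.sub hg.1) fun z r hr h ↦ by
    rw [integral_sub (hf.integrableOn_ball h) (hg.integrableOn_ball h), hf.setIntegral_ball hr h,
      hg.setIntegral_ball hr h, mul_sub]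

lemma log_dist {x : E2} (hx : x ∉ U) : HarmonicOnSet (fun w ↦ Real.log (dist w x)) U := by
  refine of_setIntegral_ball ?_ fun z r _ h ↦ setIntegral_ball_log_dist fun hxz ↦ hx (h hxz)
  refine ContinuousOn.log (by fun_prop) fun w hw ↦ dist_ne_zero.2 ?_
  rintro rfl
  exact hx hw

lemma eqOn_ball_of_forall_le (hv : HarmonicOnSet v U) (hr : 0 < r) (h : closedBall z r ⊆ U)
    (hmin : ∀ w ∈ ball z r, v z ≤ v w) : Set.EqOn v (fun _ ↦ v z) (ball z r) := by
  have hd := hv.sub (const (v z))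
  have hzero : ∫ w in ball z r, (v w - v z) = 0 := by
    rw [hd.setIntegral_ball hr h, sub_self, mul_zero]
  have hnonneg : ∀ᵐ w ∂volume.restrict (ball z r), 0 ≤ v w - v z :=
    ae_restrict_of_forall_mem measurableSet_ball fun w hw ↦ sub_nonneg.2 (hmin w hw)
  have hae := (setIntegral_eq_zero_iff_of_nonneg_ae hnonneg (hd.integrableOn_ball h)).1 hzero
  have hcont : ContinuousOn (fun w ↦ v w - v z) (ball z r) :=
    hd.1.mono (ball_subset_closedBall.trans h)
  intro w hw
  exact sub_eq_zero.1 (Measure.eqOn_open_of_ae_eq hae isOpen_ball hcont continuousOn_const hw)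

lemma isOpen_setOf_le_of_forall_le (hU : IsOpen U) (hv : HarmonicOnSet v U) {m : ℝ}
    (hm : ∀ w ∈ U, m ≤ v w) : IsOpen {w ∈ U | v w ≤ m} := by
  refine Metric.isOpen_iff.2 fun z ⟨hzU, hz⟩ ↦ ?_
  obtain ⟨r, hr, hball⟩ := Metric.nhds_basis_closedBall.mem_iff.1 (hU.mem_nhds hzU)
  have hzm : v z = m := hz.antisymm (hm z hzU)
  have hconst := hv.eqOn_ball_of_forall_le hr hball fun w hw ↦
    hzm.trans_le (hm w (hball (ball_subset_closedBall hw)))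
  exact ⟨r, hr, fun w hw ↦
    ⟨hball (ball_subset_closedBall hw), (hconst hw).trans_le hz⟩⟩

lemma nonneg_of_frontier (hW : IsOpen W) (hWb : Bornology.IsBounded W) (hv : HarmonicOnSet v W)
    (hbdry : ∀ ξ ∈ frontier W, ∀ ε > 0, ∀ᶠ z in 𝓝[W] ξ, -ε < v z) : ∀ z ∈ W, 0 ≤ v z := by
  by_contra! ⟨z₀, hz₀W, hz₀⟩
  have hcompact : ∀ c < 0, IsCompact {w ∈ W | v w ≤ c} := fun c hc ↦
    isCompact_sublevel_of_eventually_lt hWb hv.1 fun ξ hξ ↦ by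
      simpa using hbdry ξ hξ (-c) (neg_pos.2 hc)
  obtain ⟨z₁, ⟨hz₁W, hz₁⟩, hmin⟩ := (hcompact _ hz₀).exists_isMinOn ⟨z₀, hz₀W, le_rfl⟩
    (hv.1.mono fun _ h ↦ h.1)
  have hmin' : ∀ w ∈ W, v z₁ ≤ v w := fun w hw ↦
    (le_total (v w) (v z₀)).elim (fun h ↦ hmin ⟨hw, h⟩) hz₁.trans
  have hargmin := hcompact _ (hz₁.trans_lt hz₀)
  have huniv : {w ∈ W | v w ≤ v z₁} = Set.univ :=
    IsClopen.eq_univ ⟨hargmin.isClosed, isOpen_setOf_le_of_forall_le hW hv hmin'⟩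
      ⟨z₁, hz₁W, le_rfl⟩
  exact noncompact_univ E2 (huniv ▸ hargmin)

lemma le_of_frontier (hW : IsOpen W) (hWb : Bornology.IsBounded W) (hu : HarmonicOnSet u W)
    (hv : HarmonicOnSet v W)
    (hbdry : ∀ ξ ∈ frontier W, ∀ ε > 0, ∀ᶠ z in 𝓝[W] ξ, u z < v z + ε) :
    ∀ z ∈ W, u z ≤ v z := fun z hz ↦
  sub_nonneg.1 <| (hv.sub hu).nonneg_of_frontier hW hWb
    (fun ξ hξ ε hε ↦ (hbdry ξ hξ ε hε).mono fun _ h ↦ by linarith) z hz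

end HarmonicOnSet

section ParametricIntegral

variable {X : Type*} [TopologicalSpace X] [T2Space X] [MeasurableSpace X] [BorelSpace X]
  {K : Set X} {ν : Measure X} [IsFiniteMeasureOnCompacts ν]

lemma continuousOn_setIntegral_of_isCompact {Y : Type*} [TopologicalSpace Y]
    [FirstCountableTopology Y] [LocallyCompactSpace Y] {U : Set Y} {h : Y → X → ℝ}
    (hU : IsOpen U) (hK : IsCompact K) (hh : ContinuousOn (Function.uncurry h) (U ×ˢ K)) :
    ContinuousOn (fun z ↦ ∫ x in K, h z x ∂ν) U := by
  intro z hz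
  obtain ⟨L, hL, hLU, hLc⟩ := local_compact_nhds (hU.mem_nhds hz)
  obtain ⟨C, hC⟩ := (hLc.prod hK).exists_bound_of_continuousOn
    (hh.mono (Set.prod_mono_left hLU))
  refine (continuousAt_of_dominated (bound := fun _ ↦ C) ?_ ?_
    (integrableOn_const hK.measure_lt_top.ne) ?_).continuousWithinAt
  · filter_upwards [hL] with w hw
    exact (hh.uncurry_left w (hLU hw)).aestronglyMeasurable hK.measurableSet
  · filter_upwards [hL] with w hw
    exact ae_restrict_of_forall_mem hK.measurableSet fun x hx ↦ hC (w, x) ⟨hw, hx⟩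
  · exact ae_restrict_of_forall_mem hK.measurableSet fun x hx ↦
      (hh.uncurry_right x hx).continuousAt (hU.mem_nhds hz)

lemma HarmonicOnSet.setIntegral [SecondCountableTopology X] [SFinite ν] {U : Set E2}
    {h : E2 → X → ℝ} (hU : IsOpen U) (hK : IsCompact K)
    (hh : ContinuousOn (Function.uncurry h) (U ×ˢ K))
    (hharm : ∀ x ∈ K, HarmonicOnSet (h · x) U) :
    HarmonicOnSet (fun z ↦ ∫ x in K, h z x ∂ν) U := by
  refine of_setIntegral_ball (continuousOn_setIntegral_of_isCompact hU hK hh)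
    fun z r hr hball ↦ ?_
  have hint : Integrable (Function.uncurry h)
      ((volume.restrict (ball z r)).prod (ν.restrict K)) := by
    rw [Measure.prod_restrict]
    exact ((hh.mono (Set.prod_mono_left hball)).integrableOn_compact
      ((isCompact_closedBall z r).prod hK)).mono_set (Set.prod_mono_left ball_subset_closedBall)
  rw [integral_integral_swap hint, ← integral_const_mul]
  exact setIntegral_congr_fun hK.measurableSet fun x hx ↦ (hharm x hx).setIntegral_ball hr hball

end ParametricIntegral

/-- The logarithmic potential `z ↦ ∫ log |z - x| dν(x)` of `ν`, with the sign for which it is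
subharmonic. -/
noncomputable def logPotential {X : Type*} [PseudoMetricSpace X] [MeasurableSpace X]
    (ν : Measure X) (z : X) : ℝ :=
  ∫ x, Real.log (dist z x) ∂ν

section LogPotential

variable {X : Type*} [MetricSpace X] [MeasurableSpace X] [BorelSpace X] {ν : Measure X}
  {K : Set X} {z : X} {r : ℝ}

lemma integrable_log_dist [IsFiniteMeasure ν] (hK : IsCompact K) (hν : ∀ᵐ x ∂ν, x ∈ K)
    (hz : z ∉ K) : Integrable (fun x ↦ Real.log (dist z x)) ν := by
  rw [← Measure.restrict_eq_self_of_ae_mem hν]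
  refine ContinuousOn.integrableOn_compact hK
    (ContinuousOn.log (by fun_prop) fun x hx ↦ dist_ne_zero.2 ?_)
  rintro rfl
  exact hz hx

lemma logPotential_le_log [IsProbabilityMeasure ν] (hK : IsCompact K) (hν : ∀ᵐ x ∂ν, x ∈ K)
    (hz : z ∉ K) (hr : ∀ x ∈ K, dist z x ≤ r) : logPotential ν z ≤ Real.log r := by
  calc logPotential ν z ≤ ∫ _, Real.log r ∂ν :=
        integral_mono_ae (integrable_log_dist hK hν hz) (integrable_const _) <|
          hν.mono fun x hx ↦ Real.log_le_log (dist_pos.2 fun hzx ↦ hz (hzx ▸ hx)) (hr x hx)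
    _ = Real.log r := by simp

lemma log_le_logPotential [IsProbabilityMeasure ν] (hK : IsCompact K) (hν : ∀ᵐ x ∂ν, x ∈ K)
    (hr₀ : 0 < r) (hr : ∀ x ∈ K, r ≤ dist z x) : Real.log r ≤ logPotential ν z := by
  have hz : z ∉ K := fun hz ↦ by linarith [hr z hz, dist_self z]
  calc Real.log r = ∫ _, Real.log r ∂ν := by simp
    _ ≤ logPotential ν z :=
        integral_mono_ae (integrable_const _) (integrable_log_dist hK hν hz) <|
          hν.mono fun x hx ↦ Real.log_le_log hr₀ (hr x hx)

lemma harmonicOnSet_logPotential {ν : Measure E2} [IsFiniteMeasure ν] {K U : Set E2}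
    (hU : IsOpen U) (hK : IsCompact K) (hν : ∀ᵐ x ∂ν, x ∈ K) (hKU : Disjoint K U) :
    HarmonicOnSet (logPotential ν) U := by
  have hcont : ContinuousOn (Function.uncurry fun z x : E2 ↦ Real.log (dist z x)) (U ×ˢ K) := by
    refine ContinuousOn.log continuous_dist.continuousOn fun p hp ↦ dist_ne_zero.2 fun heq ↦ ?_
    exact Set.disjoint_left.1 hKU hp.2 (heq ▸ hp.1)
  have h := HarmonicOnSet.setIntegral (ν := ν) hU hK hcont
    fun x hx ↦ HarmonicOnSet.log_dist (Set.disjoint_left.1 hKU hx)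
  rwa [Measure.restrict_eq_self_of_ae_mem hν] at h

end LogPotential

section HarmonicMeasure

open Filter Topology

variable {Ω : Set E2} {ω : E2 → Measure E2} {f v : E2 → ℝ} {y z ξ : E2}

namespace IsHarmonicMeasureOfWienerRegular

lemma integral_congr (hω : IsHarmonicMeasureOfWienerRegular Ω ω) (hz : z ∈ Ω) {g : E2 → ℝ}
    (hfg : Set.EqOn f g (frontier Ω)) : ∫ ξ, f ξ ∂ω z = ∫ ξ, g ξ ∂ω z :=
  integral_congr_ae <| Filter.Eventually.mono (hω.2.1 z hz) hfg

lemma exists_continuous_extension (hω : IsHarmonicMeasureOfWienerRegular Ω ω)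
    (hf : ContinuousOn f (frontier Ω)) :
    ∃ g : E2 → ℝ, Continuous g ∧ Set.EqOn f g (frontier Ω) ∧
      ∀ z ∈ Ω, ∫ ξ, f ξ ∂ω z = ∫ ξ, g ξ ∂ω z := by
  obtain ⟨g, hg⟩ := ContinuousMap.exists_restrict_eq isClosed_frontier ⟨_, hf.domRestrict⟩
  have hfg : Set.EqOn f g (frontier Ω) := fun ξ hξ ↦ (DFunLike.congr_fun hg ⟨ξ, hξ⟩).symm
  exact ⟨g, g.continuous, hfg, fun z hz ↦ hω.integral_congr hz hfg⟩

lemma harmonicOnSet_integral (hω : IsHarmonicMeasureOfWienerRegular Ω ω)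
    (hf : ContinuousOn f (frontier Ω)) : HarmonicOnSet (fun z ↦ ∫ ξ, f ξ ∂ω z) Ω := by
  obtain ⟨g, hg, -, hint⟩ := hω.exists_continuous_extension hf
  exact (hω.2.2 g hg).1.congr hint

lemma tendsto_integral (hω : IsHarmonicMeasureOfWienerRegular Ω ω)
    (hf : ContinuousOn f (frontier Ω)) (hξ : ξ ∈ frontier Ω) :
    Tendsto (fun z ↦ ∫ ξ, f ξ ∂ω z) (𝓝[Ω] ξ) (𝓝 (f ξ)) := by
  obtain ⟨g, hg, hfg, hint⟩ := hω.exists_continuous_extension hf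
  rw [hfg hξ]
  exact ((hω.2.2 g hg).2 ξ hξ).congr' <|
    eventually_nhdsWithin_of_forall fun z hz ↦ (hint z hz).symm

lemma integrable (hω : IsHarmonicMeasureOfWienerRegular Ω ω) (hΩb : Bornology.IsBounded Ω)
    (hf : ContinuousOn f (frontier Ω)) (hz : z ∈ Ω) : Integrable f (ω z) := by
  have := hω.1 z hz
  have hcompact : IsCompact (frontier Ω) :=
    hΩb.isCompact_closure.of_isClosed_subset isClosed_frontier frontier_subset_closure
  rw [← Measure.restrict_eq_self_of_ae_mem (hω.2.1 z hz)]
  exact hf.integrableOn_compact hcompact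

lemma integral_le_of_frontier (hω : IsHarmonicMeasureOfWienerRegular Ω ω) (hΩ : IsOpen Ω)
    (hΩb : Bornology.IsBounded Ω) (hf : ContinuousOn f (frontier Ω)) (hv : HarmonicOnSet v Ω)
    (hle : ∀ ξ ∈ frontier Ω, ∀ᶠ z in 𝓝[Ω] ξ, f ξ ≤ v z) : ∀ z ∈ Ω, ∫ ξ, f ξ ∂ω z ≤ v z := by
  refine (hω.harmonicOnSet_integral hf).le_of_frontier hΩ hΩb hv fun ξ hξ ε hε ↦ ?_
  filter_upwards [hle ξ hξ,
    (hω.tendsto_integral hf hξ).eventually_lt_const (lt_add_of_pos_right _ hε)] with z hz hzε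
  linarith

end IsHarmonicMeasureOfWienerRegular

lemma continuousOn_log_dist_frontier (hΩ : IsOpen Ω) (hy : y ∈ Ω) :
    ContinuousOn (fun ξ ↦ Real.log (dist ξ y)) (frontier Ω) :=
  (HarmonicOnSet.log_dist fun hyf ↦ hyf.2 (hΩ.interior_eq.symm ▸ hy)).1

lemma green_eq_integral_log_sub_log (ω : E2 → Measure E2) (z y : E2) :
    green ω z y = (2 * Real.pi)⁻¹ * (∫ ξ, Real.log (dist ξ y) ∂ω z - Real.log (dist z y)) := by
  have hfund : ∀ x, fund x y = -(2 * Real.pi)⁻¹ * Real.log (dist x y) := fun x ↦ by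
    simp [fund]
  simp only [green, hfund, integral_const_mul]
  ring

lemma harmonicOnSet_green (hω : IsHarmonicMeasureOfWienerRegular Ω ω) (hΩ : IsOpen Ω)
    (hy : y ∈ Ω) : HarmonicOnSet (green ω · y) (Ω \ {y}) := by
  have hyU : y ∉ Ω \ {y} := fun h ↦ h.2 rfl
  simp only [green_eq_integral_log_sub_log]
  exact (((hω.harmonicOnSet_integral (continuousOn_log_dist_frontier hΩ hy)).mono
    Set.sdiff_subset).sub (HarmonicOnSet.log_dist hyU)).const_mul _

lemma tendsto_green_frontier (hω : IsHarmonicMeasureOfWienerRegular Ω ω) (hΩ : IsOpen Ω)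
    (hy : y ∈ Ω) (hξ : ξ ∈ frontier Ω) : Tendsto (green ω · y) (𝓝[Ω] ξ) (𝓝 0) := by
  have hlog := hω.tendsto_integral (continuousOn_log_dist_frontier hΩ hy) hξ
  have hξy : dist ξ y ≠ 0 := dist_ne_zero.2 fun h ↦ hξ.2 (hΩ.interior_eq.symm ▸ h ▸ hy)
  have hdist : ContinuousAt (fun z ↦ Real.log (dist z y)) ξ := ContinuousAt.log (by fun_prop) hξy
  simp only [green_eq_integral_log_sub_log]
  simpa using (hlog.sub hdist.continuousWithinAt).const_mul (2 * Real.pi)⁻¹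

lemma green_le_of_le_on_frontier (hω : IsHarmonicMeasureOfWienerRegular Ω ω) (hΩ : IsOpen Ω)
    (hΩb : Bornology.IsBounded Ω) {B : Set E2} (hB : IsClosed B)
    (hyB : y ∈ interior B) (hy : y ∈ Ω) (hv : HarmonicOnSet v Ω) (hv₀ : ∀ z ∈ Ω, 0 ≤ v z)
    (hle : ∀ z ∈ Ω ∩ frontier B, green ω z y ≤ v z) :
    ∀ z ∈ Ω \ B, green ω z y ≤ v z := by
  have hg := harmonicOnSet_green hω hΩ hy
  have hsub : Ω \ B ⊆ Ω \ {y} := Set.sdiff_subset_sdiff_right <|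
    Set.singleton_subset_iff.2 (interior_subset hyB)
  refine (hg.mono hsub).le_of_frontier (hΩ.sdiff hB) (hΩb.subset Set.sdiff_subset)
    (hv.mono Set.sdiff_subset) fun ξ hξ ε hε ↦ ?_
  by_cases hξΩ : ξ ∈ frontier Ω
  · filter_upwards [self_mem_nhdsWithin, ((tendsto_green_frontier hω hΩ hy hξΩ).mono_left
      (nhdsWithin_mono ξ Set.sdiff_subset)).eventually_lt_const hε] with z hz hzε
    linarith [hv₀ z hz.1]
  · rw [Set.sdiff_eq] at hξ
    have hξB : ξ ∈ closure Ω ∩ frontier B := by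
      rw [← frontier_compl]
      exact (frontier_inter_subset _ _ hξ).resolve_left fun h ↦ hξΩ h.1
    have hξΩ : ξ ∈ Ω := hΩ.interior_eq ▸ by_contra fun h ↦ hξΩ ⟨hξB.1, h⟩
    have hξy : ξ ∈ Ω \ {y} := ⟨hξΩ, fun h ↦ hξB.2.2 (h ▸ hyB)⟩
    have hcont : ContinuousAt (fun z ↦ v z - green ω z y) ξ :=
      (hv.1.continuousAt (hΩ.mem_nhds hξΩ)).sub
        (hg.1.continuousAt ((hΩ.sdiff isClosed_singleton).mem_nhds hξy))
    have hpos : -ε < v ξ - green ω ξ y := by linarith [hle ξ ⟨hξΩ, hξB.2⟩]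
    filter_upwards [(hcont.eventually_const_lt hpos).filter_mono nhdsWithin_le_nhds] with z hz
    linarith

end HarmonicMeasure

open Filter Topology in
lemma eventually_lt_dist_nhdsWithin {X : Type*} [PseudoMetricSpace X] {s : Set X} {ξ x₀ : X}
    {a : ℝ} (h : a < dist ξ x₀) : ∀ᶠ z in 𝓝[s] ξ, a < dist z x₀ :=
  have hcont : ContinuousAt (dist · x₀) ξ := by fun_prop
  (hcont.eventually_const_lt h).filter_mono nhdsWithin_le_nhds

/-- `p` is harmonic on `Ω`, comparable to `log |z - x₀|` away from `closedBall x₀ R`, and bounded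
below by `log (2 * R) - M`: the properties of the logarithmic potential of a probability measure
carried by `closedBall x₀ R \ Ω` which enter the barrier argument. -/
structure IsLogBarrier (Ω : Set E2) (x₀ : E2) (R M : ℝ) (p : E2 → ℝ) : Prop where
  harmonicOnSet : HarmonicOnSet p Ω
  lower_bound : ∀ z ∈ Ω, Real.log (2 * R) - M ≤ p z
  log_le : ∀ z ∈ Ω, R < dist z x₀ → Real.log (dist z x₀ - R) ≤ p z
  le_log : ∀ z ∈ Ω, R < dist z x₀ → p z ≤ Real.log (dist z x₀ + R)

namespace IsLogBarrier

open Filter Topology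

variable {Ω : Set E2} {ω : E2 → Measure E2} {x₀ y z : E2} {R M : ℝ} {p φ : E2 → ℝ}

lemma of_logPotential {K : Set E2} {ν : Measure E2} [IsProbabilityMeasure ν] (hΩ : IsOpen Ω)
    (hK : IsCompact K) (hKB : K ⊆ closedBall x₀ R \ Ω) (hν : ∀ᵐ x ∂ν, x ∈ K)
    (hM : ∀ z ∈ Ω, Real.log (2 * R) - M ≤ logPotential ν z) :
    IsLogBarrier Ω x₀ R M (logPotential ν) where
  harmonicOnSet := harmonicOnSet_logPotential hΩ hK hν <|
    Set.disjoint_left.2 fun _ hx ↦ (hKB hx).2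
  lower_bound := hM
  log_le z _ hzR := log_le_logPotential hK hν (sub_pos.2 hzR) fun x hx ↦ by
    linarith [dist_triangle z x x₀, mem_closedBall.1 (hKB hx).1]
  le_log z hz _ := logPotential_le_log hK hν (fun hzK ↦ (hKB hzK).2 hz) fun x hx ↦
    (dist_triangle_right z x x₀).trans (by linarith [mem_closedBall.1 (hKB hx).1])

lemma log_sub_le_mul_integral (hp : IsLogBarrier Ω x₀ R M p)
    (hω : IsHarmonicMeasureOfWienerRegular Ω ω) (hΩ : IsOpen Ω) (hΩb : Bornology.IsBounded Ω)
    (hR : 0 < R) (hM : 0 ≤ M) (hφ : Continuous φ) (hφ₀ : 0 ≤ φ)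
    (hφ₁ : Set.EqOn φ 1 (closedBall x₀ (7 * R))) (hz : z ∈ Ω) :
    Real.log (6 * R) - p z ≤ (M + Real.log 3) * ∫ ξ, φ ξ ∂ω z := by
  have hcoef : 0 ≤ M + Real.log 3 := add_nonneg hM (Real.log_nonneg (by norm_num))
  have hlog : Real.log (6 * R) = Real.log (2 * R) + Real.log 3 := by
    rw [← Real.log_mul (by positivity) (by norm_num)]
    ring_nf
  have hbdry : ∀ ξ ∈ frontier Ω, ∀ᶠ z in 𝓝[Ω] ξ,
      -(M + Real.log 3) * φ ξ ≤ p z - Real.log (6 * R) := by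
    intro ξ _
    rcases le_or_gt (dist ξ x₀) (7 * R) with hnear | hfar
    · filter_upwards [self_mem_nhdsWithin] with z hz
      rw [hφ₁ hnear, Pi.one_apply]
      linarith [hp.lower_bound z hz]
    · filter_upwards [self_mem_nhdsWithin, eventually_lt_dist_nhdsWithin hfar] with z hz hzfar
      have := Real.log_le_log (by positivity) (show 6 * R ≤ dist z x₀ - R by linarith)
      nlinarith [hp.log_le z hz (by linarith), mul_nonneg hcoef (hφ₀ ξ)]
  have := hω.integral_le_of_frontier hΩ hΩb (by fun_prop)
    (hp.harmonicOnSet.sub (.const (Real.log (6 * R)))) hbdry z hz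
  rw [integral_const_mul] at this
  linarith

lemma integral_log_dist_le (hp : IsLogBarrier Ω x₀ R M p)
    (hω : IsHarmonicMeasureOfWienerRegular Ω ω) (hΩ : IsOpen Ω) (hΩb : Bornology.IsBounded Ω)
    (hR : 0 < R) (hM : 0 ≤ M) (hyB : y ∈ closedBall x₀ R) (hy : y ∈ Ω) (hz : z ∈ Ω) :
    ∫ ξ, Real.log (dist ξ y) ∂ω z ≤ p z + (M + Real.log 4) := by
  refine hω.integral_le_of_frontier hΩ hΩb (continuousOn_log_dist_frontier hΩ hy)
    (hp.harmonicOnSet.add (.const _)) (fun ξ hξ ↦ ?_) z hz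
  have hξy : 0 < dist ξ y := dist_pos.2 fun h ↦ hξ.2 (hΩ.interior_eq.symm ▸ h ▸ hy)
  have hξyR : dist ξ y ≤ dist ξ x₀ + R :=
    (dist_triangle_right ξ y x₀).trans (by linarith [mem_closedBall.1 hyB])
  rcases le_or_gt (dist ξ x₀) (7 * R) with hnear | hfar
  · filter_upwards [self_mem_nhdsWithin] with z hz
    calc Real.log (dist ξ y) ≤ Real.log (2 * R * 4) := Real.log_le_log hξy (by linarith)
      _ = Real.log (2 * R) + Real.log 4 := Real.log_mul (by positivity) (by norm_num)
      _ ≤ p z + (M + Real.log 4) := by linarith [hp.lower_bound z hz]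
  · have hlt : (dist ξ x₀ + R) / 4 + R < dist ξ x₀ := by linarith
    filter_upwards [self_mem_nhdsWithin, eventually_lt_dist_nhdsWithin hlt] with z hz hzfar
    calc Real.log (dist ξ y) ≤ Real.log ((dist z x₀ - R) * 4) :=
          Real.log_le_log hξy (by linarith)
      _ = Real.log (dist z x₀ - R) + Real.log 4 := Real.log_mul (by linarith) (by norm_num)
      _ ≤ p z + (M + Real.log 4) := by linarith [hp.log_le z hz (by linarith)]

lemma green_le_of_dist_eq (hp : IsLogBarrier Ω x₀ R M p)
    (hω : IsHarmonicMeasureOfWienerRegular Ω ω) (hΩ : IsOpen Ω) (hΩb : Bornology.IsBounded Ω)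
    (hR : 0 < R) (hM : 0 ≤ M) (hyB : y ∈ closedBall x₀ R) (hy : y ∈ Ω) (hz : z ∈ Ω)
    (hzx₀ : dist z x₀ = 2 * R) : green ω z y ≤ (2 * Real.pi)⁻¹ * (M + Real.log 12) := by
  rw [green_eq_integral_log_sub_log]
  gcongr
  have hlog : Real.log 12 + Real.log R = Real.log 4 + Real.log (2 * R + R) := by
    rw [← Real.log_mul (by norm_num) hR.ne', ← Real.log_mul (by norm_num) (by positivity)]
    ring_nf
  have hle := hp.le_log z hz (by linarith)
  rw [hzx₀] at hle
  have hzy : Real.log R ≤ Real.log (dist z y) :=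
    Real.log_le_log hR (by linarith [dist_triangle z y x₀, mem_closedBall.1 hyB])
  linarith [hp.integral_log_dist_le hω hΩ hΩb hR hM hyB hy hz]

lemma log_two_le_of_dist_eq (hp : IsLogBarrier Ω x₀ R M p)
    (hω : IsHarmonicMeasureOfWienerRegular Ω ω) (hΩ : IsOpen Ω) (hΩb : Bornology.IsBounded Ω)
    (hR : 0 < R) (hM : 0 ≤ M) (hφ : Continuous φ) (hφ₀ : 0 ≤ φ)
    (hφ₁ : Set.EqOn φ 1 (closedBall x₀ (7 * R))) (hz : z ∈ Ω) (hzx₀ : dist z x₀ = 2 * R) :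
    Real.log 2 ≤ (M + Real.log 3) * ∫ ξ, φ ξ ∂ω z := by
  have hlog : Real.log (6 * R) = Real.log 2 + Real.log (2 * R + R) := by
    rw [← Real.log_mul (by norm_num) (by positivity)]
    ring_nf
  have hle := hp.le_log z hz (by linarith)
  rw [hzx₀] at hle
  linarith [hp.log_sub_le_mul_integral hω hΩ hΩb hR hM hφ hφ₀ hφ₁ hz]

lemma green_le_mul_integral (hp : IsLogBarrier Ω x₀ R M p)
    (hω : IsHarmonicMeasureOfWienerRegular Ω ω) (hΩ : IsOpen Ω) (hΩb : Bornology.IsBounded Ω)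
    (hR : 0 < R) (hM : 0 ≤ M) (hφ : Continuous φ) (hφ₀ : 0 ≤ φ)
    (hφ₁ : Set.EqOn φ 1 (closedBall x₀ (7 * R))) (hyB : y ∈ closedBall x₀ R) (hy : y ∈ Ω)
    (hz : z ∈ Ω \ closedBall x₀ (2 * R)) :
    green ω z y ≤ (2 * Real.pi)⁻¹ * (M + Real.log 12) * ((M + Real.log 3) / Real.log 2) *
      ∫ ξ, φ ξ ∂ω z := by
  have hlog2 : 0 < Real.log 2 := Real.log_pos (by norm_num)
  have : 0 < Real.log 3 := Real.log_pos (by norm_num)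
  have : 0 < Real.log 12 := Real.log_pos (by norm_num)
  refine green_le_of_le_on_frontier hω hΩ hΩb isClosed_closedBall ?_ hy
    ((hω.harmonicOnSet_integral hφ.continuousOn).const_mul _)
    (fun w _ ↦ mul_nonneg (by positivity) (integral_nonneg hφ₀)) (fun w hw ↦ ?_) z hz
  · exact ball_subset_interior_closedBall (closedBall_subset_ball (by linarith) hyB)
  · have hwx₀ : dist w x₀ = 2 * R := frontier_closedBall_subset_sphere hw.2
    calc green ω w y ≤ (2 * Real.pi)⁻¹ * (M + Real.log 12) * 1 := by
          rw [mul_one]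
          exact hp.green_le_of_dist_eq hω hΩ hΩb hR hM hyB hy hw.1 hwx₀
      _ ≤ (2 * Real.pi)⁻¹ * (M + Real.log 12) *
            ((M + Real.log 3) / Real.log 2 * ∫ ξ, φ ξ ∂ω w) := by
          gcongr
          rw [div_mul_eq_mul_div, one_le_div hlog2]
          exact hp.log_two_le_of_dist_eq hω hΩ hΩb hR hM hφ hφ₀ hφ₁ hw.1 hwx₀
      _ = _ := by ring

lemma green_le (hp : IsLogBarrier Ω x₀ R M p)
    (hω : IsHarmonicMeasureOfWienerRegular Ω ω) (hΩ : IsOpen Ω) (hΩb : Bornology.IsBounded Ω)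
    (hR : 0 < R) (hM : 0 ≤ M) (hyB : y ∈ closedBall x₀ R) (hy : y ∈ Ω)
    (hz : z ∈ Ω \ closedBall x₀ (2 * R)) :
    green ω z y ≤ (2 * Real.pi)⁻¹ * (M + Real.log 12) * ((M + Real.log 3) / Real.log 2) *
      (ω z).real (closedBall x₀ (8 * R)) := by
  have := hω.1 z hz.1
  obtain ⟨φ, hφ0, hφ1, hφ⟩ := exists_continuous_zero_one_of_isClosed
    (isOpen_ball (x := x₀) (ε := 8 * R)).isClosed_compl
    (isClosed_closedBall (x := x₀) (ε := 7 * R))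
    (Set.disjoint_compl_left_iff_subset.2 (closedBall_subset_ball (by linarith)))
  refine (hp.green_le_mul_integral hω hΩ hΩb hR hM φ.continuous (fun ξ ↦ (hφ ξ).1) hφ1
    hyB hy hz).trans ?_
  have : 0 < Real.log 2 := Real.log_pos (by norm_num)
  have : 0 < Real.log 3 := Real.log_pos (by norm_num)
  have : 0 < Real.log 12 := Real.log_pos (by norm_num)
  gcongr
  rw [← integral_indicator_one measurableSet_closedBall]
  refine integral_mono (hω.integrable hΩb φ.continuous.continuousOn hz.1)
    ((integrable_const 1).indicator measurableSet_closedBall) fun ξ ↦ ?_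
  by_cases hξ : ξ ∈ closedBall x₀ (8 * R)
  · simpa [Set.indicator_of_mem hξ] using (hφ ξ).2
  · rw [Set.indicator_of_notMem hξ]
    exact (hφ0 fun h ↦ hξ (ball_subset_closedBall h)).le

end IsLogBarrier

lemma ofReal_sub_add_ofReal_add_ofReal_neg {a b : ℝ} (h : b ≤ a) :
    ENNReal.ofReal (a - b) + (ENNReal.ofReal b + ENNReal.ofReal (-a)) =
      ENNReal.ofReal (-b) + ENNReal.ofReal a := by
  rw [← ENNReal.toReal_eq_toReal_iff' (by finiteness) (by finiteness)]
  repeat rw [ENNReal.toReal_add (by finiteness) (by finiteness)]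
  simp only [ENNReal.toReal_ofReal']
  grind

lemma coe_ennreal_sub_eq_coe_ennreal_sub_coe {P Q N : ℝ≥0∞} {a : ℝ} (hN : N ≠ ⊤)
    (h : Q + (N + ENNReal.ofReal (-a)) = P + ENNReal.ofReal a) :
    (P : EReal) - N = Q - a := by
  lift N to NNReal using hN
  rcases eq_or_ne Q ⊤ with rfl | hQ
  · have hP : P = ⊤ := by simpa using h.symm
    rw [hP]
    rfl
  · have hP : P ≠ ⊤ := by
      rintro rfl
      exact absurd h (by simp [hQ])
    lift P to NNReal using hP
    lift Q to NNReal using hQ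
    have hreal := congrArg ENNReal.toReal h
    simp only [ENNReal.toReal_add, ENNReal.toReal_ofReal', ne_eq, ENNReal.coe_ne_top,
      ENNReal.ofReal_ne_top, ENNReal.add_eq_top, or_self, not_false_eq_true,
      ENNReal.coe_toReal] at hreal
    simp only [EReal.coe_nnreal_eq_coe_real, ← EReal.coe_sub, EReal.coe_eq_coe_iff]
    linarith [max_zero_sub_max_neg_zero_eq_self a]

/-- The logarithmic kernel `log (S / |x - y|)` at scale `S`, equal to `⊤` on the diagonal and
truncated to `0` where `|x - y| > S`. -/
noncomputable def logKernel {X : Type*} [PseudoMetricSpace X] (S : ℝ) (x y : X) : ℝ≥0∞ :=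
  if x = y then ⊤ else ENNReal.ofReal (Real.log (S / dist x y))

section LogKernel

variable {X : Type*} [MetricSpace X] {S : ℝ} {x y : X}

lemma logKernel_of_ne (S : ℝ) (h : x ≠ y) :
    logKernel S x y = ENNReal.ofReal (Real.log (S / dist x y)) :=
  if_neg h

lemma measurable_logKernel [MeasurableSpace X] [BorelSpace X] [SecondCountableTopology X] :
    Measurable fun p : X × X ↦ logKernel S p.1 p.2 :=
  Measurable.ite (measurableSet_eq_fun measurable_fst measurable_snd) measurable_const
    (by fun_prop)

lemma logKernel_add_eq (hS : 0 < S) (h : dist x y ≤ S) :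
    logKernel S x y + (ENNReal.ofReal (Real.log (dist x y)) + ENNReal.ofReal (-Real.log S)) =
      logKernel 1 x y + ENNReal.ofReal (Real.log S) := by
  rcases eq_or_ne x y with rfl | hxy
  · simp [logKernel]
  · have hd : 0 < dist x y := dist_pos.2 hxy
    rw [logKernel_of_ne _ hxy, logKernel_of_ne _ hxy, Real.log_div hS.ne' hd.ne', one_div,
      Real.log_inv, ofReal_sub_add_ofReal_add_ofReal_neg (Real.log_le_log hd h)]

end LogKernel

section Energy

variable {μ : Measure E2} {F : Set E2} {x₀ : E2} {ρ R S : ℝ}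

lemma ae_dist_le_of_measure_compl_closedBall_eq_zero [IsProbabilityMeasure μ]
    (hμ : μ (closedBall x₀ ρ)ᶜ = 0) : ∀ᵐ p ∂μ.prod μ, dist p.1 p.2 ≤ 2 * ρ := by
  filter_upwards [Measure.quasiMeasurePreserving_fst.ae (mem_ae_iff.2 hμ),
    Measure.quasiMeasurePreserving_snd.ae (mem_ae_iff.2 hμ)] with p h₁ h₂
  linarith [dist_triangle_right p.1 p.2 x₀, mem_closedBall.1 h₁, mem_closedBall.1 h₂]

lemma lintegral_ofReal_log_dist_ne_top [IsProbabilityMeasure μ]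
    (hμ : ∀ᵐ p ∂μ.prod μ, dist p.1 p.2 ≤ S) :
    ∫⁻ p, ENNReal.ofReal (Real.log (dist p.1 p.2)) ∂μ.prod μ ≠ ⊤ := by
  refine ((lintegral_mono_ae (hμ.mono fun p hp ↦ ENNReal.ofReal_le_ofReal
    ((Real.log_le_self dist_nonneg).trans hp))).trans_lt ?_).ne
  simp

lemma logEnergy_eq_lintegral_logKernel_sub [IsProbabilityMeasure μ] (hS : 0 < S)
    (hμ : ∀ᵐ p ∂μ.prod μ, dist p.1 p.2 ≤ S) :
    logEnergy μ = (∫⁻ p, logKernel S p.1 p.2 ∂μ.prod μ : ℝ≥0∞) - (Real.log S : EReal) := by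
  refine coe_ennreal_sub_eq_coe_ennreal_sub_coe (lintegral_ofReal_log_dist_ne_top hμ) ?_
  have hkey : ∫⁻ p, (logKernel S p.1 p.2 +
      (ENNReal.ofReal (Real.log (dist p.1 p.2)) + ENNReal.ofReal (-Real.log S))) ∂μ.prod μ =
        ∫⁻ p, (logKernel 1 p.1 p.2 + ENNReal.ofReal (Real.log S)) ∂μ.prod μ :=
    lintegral_congr_ae (hμ.mono fun p hp ↦ logKernel_add_eq hS hp)
  rw [lintegral_add_left measurable_logKernel, lintegral_add_right _ measurable_const,
    lintegral_add_right _ measurable_const, lintegral_const, lintegral_const, measure_univ,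
    mul_one, mul_one] at hkey
  -- `convert` reconciles the decidability instances of the two diagonal conditions.
  convert hkey using 3
  unfold logKernel
  congr!

lemma neg_log_le_wienerV (hS : 0 < S) (hρ : 2 * ρ ≤ S) (hF : F ⊆ closedBall x₀ ρ) :
    (-Real.log S : ℝ) ≤ wienerV F := by
  refine le_iInf fun μ ↦ le_iInf fun _ ↦ le_iInf fun hμF ↦ ?_
  have hμ := ae_dist_le_of_measure_compl_closedBall_eq_zero
    (measure_mono_null (Set.compl_subset_compl.2 hF) hμF)
  rw [logEnergy_eq_lintegral_logKernel_sub hS (hμ.mono fun _ h ↦ h.trans hρ), EReal.coe_neg,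
    sub_eq_add_neg]
  exact le_add_of_nonneg_left (EReal.coe_ennreal_nonneg _)

lemma wienerV_le_logEnergy (μ : Measure E2) [IsProbabilityMeasure μ] (hμ : μ Fᶜ = 0) :
    wienerV F ≤ logEnergy μ :=
  iInf_le_of_le μ (iInf_le_of_le ‹_› (iInf_le_of_le hμ le_rfl))

lemma exists_lintegral_logKernel_le_of_wienerV_lt (hS : 0 < S) (hρ : 2 * ρ ≤ S)
    (hF : F ⊆ closedBall x₀ ρ) {e : ℝ} (he : wienerV F < (e - Real.log S : ℝ)) :
    ∃ μ : Measure E2, IsProbabilityMeasure μ ∧ μ Fᶜ = 0 ∧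
      ∫⁻ p, logKernel S p.1 p.2 ∂μ.prod μ ≤ ENNReal.ofReal e := by
  obtain ⟨μ, hμ, hμF, hμe⟩ := by simpa only [wienerV, iInf_lt_iff] using he
  have hdist := ae_dist_le_of_measure_compl_closedBall_eq_zero
    (measure_mono_null (Set.compl_subset_compl.2 hF) hμF)
  rw [logEnergy_eq_lintegral_logKernel_sub hS (hdist.mono fun _ h ↦ h.trans hρ),
    EReal.coe_sub] at hμe
  refine ⟨μ, hμ, hμF, le_of_not_gt fun hlt ↦ hμe.not_ge (EReal.sub_le_sub ?_ le_rfl)⟩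
  calc (e : EReal) ≤ (ENNReal.ofReal e : EReal) := by
        rw [EReal.coe_ennreal_ofReal]
        exact_mod_cast le_max_left e 0
    _ ≤ _ := EReal.coe_ennreal_le_coe_ennreal_iff.2 hlt.le

lemma wienerV_le_neg_log_of_le_logCap {t : ℝ} (ht : 0 < t) (h : t ≤ logCap F) :
    wienerV F ≤ (-Real.log t : ℝ) := by
  rw [logCap] at h
  split_ifs at h with htop
  · linarith
  · refine (EReal.le_coe_toReal htop).trans ?_
    rw [EReal.coe_le_coe_iff, le_neg, Real.log_le_iff_le_exp ht]
    exact h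

lemma exp_neg_le_logCap {v : ℝ} (h : wienerV F ≤ v) (hbot : wienerV F ≠ ⊥) :
    Real.exp (-v) ≤ logCap F := by
  rw [logCap, if_neg (ne_top_of_le_ne_top (EReal.coe_ne_top v) h), Real.exp_le_exp, neg_le_neg_iff]
  exact EReal.toReal_le_toReal h hbot (EReal.coe_ne_top v)

lemma setOf_lt_log_div_dist_subset {X : Type*} [MetricSpace X] {t : ℝ} (x : X) (hS : 0 < S)
    (ht : 0 < t) : {y | t < Real.log (S / dist x y)} ⊆ ball x (S * Real.exp (-t)) := by
  intro y (hy : t < Real.log (S / dist x y))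
  have hd : 0 < dist x y := dist_pos.2 <| by
    rintro rfl
    simp [ht.not_gt] at hy
  rw [Real.lt_log_iff_exp_lt (by positivity), lt_div_iff₀' hd] at hy
  rwa [mem_ball, dist_comm, Real.exp_neg, ← div_eq_mul_inv, lt_div_iff₀ (Real.exp_pos t)]

lemma volume_setOf_lt_log_div_dist_le {t : ℝ} (x : E2) (hS : 0 < S) (ht : 0 < t) :
    volume {y | t < Real.log (S / dist x y)} ≤
      ENNReal.ofReal (Real.pi * S ^ 2 * Real.exp (-2 * t)) := by
  refine (measure_mono (setOf_lt_log_div_dist_subset x hS ht)).trans_eq ?_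
  rw [EuclideanSpace.volume_ball_fin_two, ← ENNReal.ofReal_pow (by positivity),
    ← ENNReal.ofReal_mul (by positivity), mul_pow, ← Real.exp_nat_mul]
  ring_nf

lemma lintegral_logKernel_le (hS : 0 < S) (x : E2) :
    ∫⁻ y, logKernel S x y ≤ ENNReal.ofReal (Real.pi * S ^ 2 / 2) := by
  have hae : ∀ᵐ y : E2, logKernel S x y = ENNReal.ofReal (max (Real.log (S / dist x y)) 0) := by
    filter_upwards [Measure.ae_ne volume x] with y hy
    rw [logKernel_of_ne S hy.symm, ENNReal.ofReal_max, ENNReal.ofReal_zero, max_eq_left zero_le]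
  have hint : IntegrableOn (fun t : ℝ ↦ Real.pi * S ^ 2 * Real.exp (-2 * t)) (Set.Ioi 0) :=
    (integrableOn_exp_mul_Ioi (by norm_num) 0).const_mul _
  calc ∫⁻ y, logKernel S x y
      = ∫⁻ t in Set.Ioi 0, volume {y | t < max (Real.log (S / dist x y)) 0} := by
        rw [lintegral_congr_ae hae]
        exact lintegral_eq_lintegral_meas_lt volume (.of_forall fun y ↦ le_max_right _ _)
          (by fun_prop)
    _ ≤ ∫⁻ t in Set.Ioi 0, ENNReal.ofReal (Real.pi * S ^ 2 * Real.exp (-2 * t)) := by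
        refine setLIntegral_mono' measurableSet_Ioi fun t (ht : 0 < t) ↦ ?_
        simpa only [lt_max_iff, ht.not_gt, or_false] using volume_setOf_lt_log_div_dist_le x hS ht
    _ = ENNReal.ofReal (Real.pi * S ^ 2 / 2) := by
        rw [← ofReal_integral_eq_lintegral_ofReal hint (.of_forall fun t ↦ by positivity),
          integral_const_mul, integral_exp_mul_Ioi (by norm_num)]
        norm_num
        ring_nf

lemma wienerV_closedBall_le (hR : 0 < R) :
    wienerV (closedBall x₀ R) ≤ (2 - Real.log (2 * R) : ℝ) := by
  have hvol : volume (closedBall x₀ R) = ENNReal.ofReal (Real.pi * R ^ 2) := by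
    rw [EuclideanSpace.volume_closedBall_fin_two, ← ENNReal.ofReal_pow hR.le,
      ← ENNReal.ofReal_mul (by positivity), mul_comm]
  have hvol₀ : volume (closedBall x₀ R) ≠ 0 := (measure_closedBall_pos _ _ hR).ne'
  have hvol₁ : volume (closedBall x₀ R) ≠ ⊤ := measure_closedBall_lt_top.ne
  set σ : Measure E2 := ProbabilityTheory.cond volume (closedBall x₀ R) with hσ
  have : IsProbabilityMeasure σ := ProbabilityTheory.cond_isProbabilityMeasure_of_finite hvol₀ hvol₁
  have hσB : σ (closedBall x₀ R)ᶜ = 0 :=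
    mem_ae_iff.1 (ProbabilityTheory.ae_cond_mem measurableSet_closedBall)
  have hpot : ∀ x, ∫⁻ y, logKernel (2 * R) x y ∂σ ≤ 2 := fun x ↦ by
    rw [hσ, ProbabilityTheory.cond, lintegral_smul_measure, smul_eq_mul]
    calc (volume (closedBall x₀ R))⁻¹ * ∫⁻ y in closedBall x₀ R, logKernel (2 * R) x y
        ≤ (volume (closedBall x₀ R))⁻¹ * ENNReal.ofReal (Real.pi * (2 * R) ^ 2 / 2) := by
          gcongr
          exact (setLIntegral_le_lintegral _ _).trans (lintegral_logKernel_le (by positivity) x)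
      _ = (volume (closedBall x₀ R))⁻¹ * (volume (closedBall x₀ R) * 2) := by
          rw [hvol, ← ENNReal.ofReal_ofNat 2, ← ENNReal.ofReal_mul (by positivity)]
          ring_nf
      _ = 2 := ENNReal.inv_mul_cancel_left hvol₀ hvol₁
  refine (wienerV_le_logEnergy σ hσB).trans ?_
  rw [logEnergy_eq_lintegral_logKernel_sub (by positivity)
    (ae_dist_le_of_measure_compl_closedBall_eq_zero hσB), EReal.coe_sub]
  refine EReal.sub_le_sub ?_ le_rfl
  have : ∫⁻ p, logKernel (2 * R) p.1 p.2 ∂σ.prod σ ≤ 2 := by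
    rw [lintegral_prod _ measurable_logKernel.aemeasurable]
    exact (lintegral_mono hpot).trans (by simp)
  refine (EReal.coe_ennreal_le_coe_ennreal_iff.2 this).trans_eq ?_
  rw [← ENNReal.ofReal_ofNat 2, EReal.coe_ennreal_ofReal, max_eq_left (by norm_num)]

lemma exists_lintegral_logKernel_le_of_logCap_le {c : ℝ} (hc : 0 < c) (hR : 0 < R)
    (hF : F ⊆ closedBall x₀ R) (hcap : c * logCap (closedBall x₀ R) ≤ logCap F) :
    ∃ μ : Measure E2, IsProbabilityMeasure μ ∧ μ Fᶜ = 0 ∧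
      ∫⁻ p, logKernel (2 * R) p.1 p.2 ∂μ.prod μ ≤ ENNReal.ofReal (3 + |Real.log c|) := by
  have hbot : wienerV (closedBall x₀ R) ≠ ⊥ := ne_bot_of_le_ne_bot (EReal.coe_ne_bot _)
    (neg_log_le_wienerV (by positivity) le_rfl subset_rfl)
  have hball := exp_neg_le_logCap (wienerV_closedBall_le hR) hbot
  have hV : wienerV F ≤ _ := wienerV_le_neg_log_of_le_logCap (by positivity)
    ((mul_le_mul_of_nonneg_left hball hc.le).trans hcap)
  refine exists_lintegral_logKernel_le_of_wienerV_lt (by positivity) le_rfl hF (hV.trans_lt ?_)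
  rw [EReal.coe_lt_coe_iff, Real.log_mul hc.ne' (Real.exp_pos _).ne', Real.log_exp]
  linarith [neg_abs_le (Real.log c)]

end Energy

section BoundedPotential

lemma exists_probability_lintegral_le_of_lintegral_prod_le {X : Type*} [MeasurableSpace X]
    {k : X → X → ℝ≥0∞} (hk : Measurable (Function.uncurry k)) {μ : Measure X}
    [IsProbabilityMeasure μ] {E : ℝ≥0∞} (hE₀ : E ≠ 0) (hE : E ≠ ⊤)
    (hμ : ∫⁻ p, k p.1 p.2 ∂μ.prod μ ≤ E) :
    ∃ ν : Measure X, IsProbabilityMeasure ν ∧ ν ≪ μ ∧ ∀ᵐ x ∂ν, ∫⁻ y, k x y ∂ν ≤ 4 * E := by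
  have hL : Measurable fun x ↦ ∫⁻ y, k x y ∂μ := hk.lintegral_prod_right'
  set A := {x | ∫⁻ y, k x y ∂μ < 2 * E} with hA_def
  have hA : MeasurableSet A := measurableSet_lt hL measurable_const
  have hAc : μ Aᶜ ≤ 2⁻¹ := by
    calc μ Aᶜ = μ {x | 2 * E ≤ ∫⁻ y, k x y ∂μ} := by simp only [hA_def, Set.compl_ofPred, not_lt]
      _ ≤ (∫⁻ x, ∫⁻ y, k x y ∂μ ∂μ) / (2 * E) :=
          meas_ge_le_lintegral_div hL.aemeasurable (by simp [hE₀]) (by finiteness)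
      _ ≤ E / (2 * E) := by
          gcongr
          exact (lintegral_prod _ hk.aemeasurable).symm.trans_le hμ
      _ = 2⁻¹ := by
          rw [← one_mul E, ← mul_assoc, mul_one, ENNReal.mul_div_mul_right _ _ hE₀ hE, one_div]
  have hA_half : 2⁻¹ ≤ μ A := by
    rw [← compl_compl A, prob_compl_eq_one_sub hA.compl, ← ENNReal.one_sub_inv_two]
    exact tsub_le_tsub_left hAc 1
  have hA₀ : μ A ≠ 0 := (lt_of_lt_of_le (by simp) hA_half).ne'
  refine ⟨ProbabilityTheory.cond μ A, ProbabilityTheory.cond_isProbabilityMeasure hA₀,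
    ProbabilityTheory.cond_absolutelyContinuous, ?_⟩
  filter_upwards [ProbabilityTheory.ae_cond_mem hA] with x hx
  calc ∫⁻ y, k x y ∂ProbabilityTheory.cond μ A
      = (μ A)⁻¹ * ∫⁻ y in A, k x y ∂μ := by
        rw [ProbabilityTheory.cond, lintegral_smul_measure, smul_eq_mul]
    _ ≤ 2 * (2 * E) := by
        gcongr
        · exact ENNReal.inv_le_iff_inv_le.1 hA_half
        · exact (setLIntegral_le_lintegral _ _).trans hx.le
    _ = 4 * E := by rw [← mul_assoc]; norm_num

variable {X : Type*} [MetricSpace X] {S c : ℝ} {x z z' : X}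

lemma logKernel_le_log_add (hS : 0 < S) (hc : 1 ≤ c) (hzx : z ≠ x)
    (h : dist z' x ≤ c * dist z x) :
    logKernel S z x ≤ ENNReal.ofReal (Real.log c) + logKernel S z' x := by
  rcases eq_or_ne z' x with rfl | hz'x
  · simp [logKernel]
  · have hd : 0 < dist z x := dist_pos.2 hzx
    have hd' : 0 < dist z' x := dist_pos.2 hz'x
    rw [logKernel_of_ne S hzx, logKernel_of_ne S hz'x]
    refine (ENNReal.ofReal_le_ofReal ?_).trans ENNReal.ofReal_add_le
    rw [← Real.log_mul (by positivity) (by positivity), ← mul_div_assoc]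
    refine Real.log_le_log (by positivity) ((div_le_div_iff₀ hd hd').2 ?_)
    nlinarith

lemma exists_mem_forall_dist_le_three_mul_dist {A : Set X} (hA : A.Nonempty) (hz : z ∉ closure A) :
    ∃ z' ∈ A, ∀ x ∈ A, dist z' x ≤ 3 * dist z x := by
  have hpos : 0 < infDist z A := by
    simpa [infDist_closure] using (isClosed_closure.notMem_iff_infDist_pos hA.closure).1 hz
  obtain ⟨z', hz', hlt⟩ := (infDist_lt_iff hA).1 (show infDist z A < 2 * infDist z A by linarith)
  refine ⟨z', hz', fun x hx ↦ ?_⟩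
  linarith [dist_triangle_left z' x z, infDist_le_dist_of_mem (x := z) hx]

variable [MeasurableSpace X] {ν : Measure X} [IsProbabilityMeasure ν] {K : Set X}

-- The maximum principle for potentials, with an additive loss of `log 3`: `z` is compared with an
-- almost nearest point of the set on which the potential is known to be bounded.
lemma lintegral_logKernel_le_of_ae_le (hS : 0 < S) (hK : IsClosed K) (hν : ∀ᵐ x ∂ν, x ∈ K)
    {E : ℝ≥0∞} (hE : ∀ᵐ x ∂ν, ∫⁻ y, logKernel S x y ∂ν ≤ E) (hz : z ∉ K) :
    ∫⁻ y, logKernel S z y ∂ν ≤ ENNReal.ofReal (Real.log 3) + E := by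
  set A := {x ∈ K | ∫⁻ y, logKernel S x y ∂ν ≤ E}
  have hA : ∀ᵐ x ∂ν, x ∈ A := hν.and hE
  obtain ⟨z', hz', hdist⟩ := exists_mem_forall_dist_le_three_mul_dist hA.exists
    fun hzA ↦ hz (closure_minimal (Set.sep_subset K _) hK hzA)
  calc ∫⁻ y, logKernel S z y ∂ν
      ≤ ∫⁻ y, (ENNReal.ofReal (Real.log 3) + logKernel S z' y) ∂ν :=
        lintegral_mono_ae <| hA.mono fun x hx ↦
          logKernel_le_log_add hS (by norm_num) (fun h ↦ hz (h ▸ hx.1)) (hdist x hx)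
    _ = ENNReal.ofReal (Real.log 3) + ∫⁻ y, logKernel S z' y ∂ν := by
        simp [lintegral_add_left]
    _ ≤ ENNReal.ofReal (Real.log 3) + E := by gcongr; exact hz'.2

lemma log_sub_le_logPotential [BorelSpace X] (hS : 0 < S) (hK : IsCompact K) (hν : ∀ᵐ x ∂ν, x ∈ K)
    {M : ℝ} (hM : 0 ≤ M) (hz : z ∉ K) (h : ∫⁻ y, logKernel S z y ∂ν ≤ ENNReal.ofReal M) :
    Real.log S - M ≤ logPotential ν z := by
  have hint : Integrable (fun x ↦ Real.log S - Real.log (dist z x)) ν :=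
    (integrable_const _).sub (integrable_log_dist hK hν hz)
  have hker : ∀ᵐ x ∂ν,
      ENNReal.ofReal (Real.log S - Real.log (dist z x)) = logKernel S z x := by
    filter_upwards [hν] with x hx
    have hzx : z ≠ x := fun h ↦ hz (h ▸ hx)
    rw [logKernel_of_ne S hzx, Real.log_div hS.ne' (dist_ne_zero.2 hzx)]
  have hle : ∫ x, (Real.log S - Real.log (dist z x)) ∂ν ≤ M := by
    rw [integral_eq_lintegral_pos_part_sub_lintegral_neg_part hint, lintegral_congr_ae hker]
    exact (sub_le_self _ ENNReal.toReal_nonneg).trans (ENNReal.toReal_le_of_le_ofReal hM h)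
  rw [integral_sub (integrable_const _) (integrable_log_dist hK hν hz), integral_const,
    probReal_univ, one_smul] at hle
  rw [logPotential]
  linarith

end BoundedPotential

lemma exists_isLogBarrier {Ω F : Set E2} {x₀ : E2} {c R : ℝ} (hΩ : IsOpen Ω) (hc : 0 < c)
    (hR : 0 < R) (hF : F ⊆ closedBall x₀ R \ Ω)
    (hcap : c * logCap (closedBall x₀ R) ≤ logCap F) :
    ∃ p, IsLogBarrier Ω x₀ R (4 * (3 + |Real.log c|) + Real.log 3) p := by
  obtain ⟨μ, _, hμF, hμ⟩ := exists_lintegral_logKernel_le_of_logCap_le hc hR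
    (hF.trans Set.sdiff_subset) hcap
  obtain ⟨ν, _, hνμ, hν⟩ := exists_probability_lintegral_le_of_lintegral_prod_le
    measurable_logKernel (by simpa using by positivity) ENNReal.ofReal_ne_top hμ
  have hK : IsCompact (closedBall x₀ R \ Ω) := (isCompact_closedBall x₀ R).diff hΩ
  have hνK : ∀ᵐ x ∂ν, x ∈ closedBall x₀ R \ Ω :=
    hνμ.ae_le (mem_ae_iff.2 (measure_mono_null (Set.compl_subset_compl.2 hF) hμF))
  have hlog : 0 ≤ Real.log 3 := Real.log_nonneg (by norm_num)
  refine ⟨logPotential ν, .of_logPotential hΩ hK subset_rfl hνK fun z hz ↦ ?_⟩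
  refine log_sub_le_logPotential (by positivity) hK hνK (by positivity) (fun h ↦ h.2 hz) ?_
  refine (lintegral_logKernel_le_of_ae_le (by positivity) hK.isClosed hνK hν
    fun h ↦ h.2 hz).trans_eq ?_
  rw [ENNReal.ofReal_add (by positivity) hlog, ENNReal.ofReal_mul (by norm_num),
    ENNReal.ofReal_ofNat, add_comm]

theorem stmt_15_general : ∃ A : ℝ, 0 < A ∧ ∀ c : ℝ, 0 < c →
    ∀ Ω : Set E2, IsOpen Ω → Bornology.IsBounded Ω →
      ∀ ω : E2 → Measure E2, IsHarmonicMeasureOfWienerRegular Ω ω →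
        ∀ (x₀ : E2) (R : ℝ), 0 < R → ∀ F ⊆ closedBall x₀ R \ Ω,
          c * logCap (closedBall x₀ R) ≤ logCap F →
          ∀ z ∈ Ω \ closedBall x₀ (2 * R), ∀ y ∈ closedBall x₀ R ∩ Ω,
            green ω z y ≤ A * (1 + |Real.log c|) ^ 2 * (ω z (closedBall x₀ (8 * R))).toReal := by
  have : 0 < Real.log 2 := Real.log_pos (by norm_num)
  have hlog₃ : 0 < Real.log 3 := Real.log_pos (by norm_num)
  have hlog₁₂ : Real.log 3 ≤ Real.log 12 := Real.log_le_log (by norm_num) (by norm_num)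
  set a := 12 + Real.log 3 + Real.log 12
  have : 0 < a := by positivity
  refine ⟨(2 * Real.pi)⁻¹ * (a ^ 2 / Real.log 2), by positivity,
    fun c hc Ω hΩ hΩb ω hω x₀ R hR F hF hcap z hz y hy ↦ ?_⟩
  obtain ⟨p, hp⟩ := exists_isLogBarrier hΩ hc hR hF hcap
  set M := 4 * (3 + |Real.log c|) + Real.log 3
  have hl := abs_nonneg (Real.log c)
  have hM₁₂ : M + Real.log 12 ≤ a * (1 + |Real.log c|) := by nlinarith
  have hM₃ : M + Real.log 3 ≤ a * (1 + |Real.log c|) := by linarith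
  calc green ω z y
      ≤ (2 * Real.pi)⁻¹ * (M + Real.log 12) * ((M + Real.log 3) / Real.log 2) *
          (ω z).real (closedBall x₀ (8 * R)) :=
        hp.green_le hω hΩ hΩb hR (by positivity) hy.1 hy.2 hz
    _ ≤ (2 * Real.pi)⁻¹ * (a * (1 + |Real.log c|)) * ((a * (1 + |Real.log c|)) / Real.log 2) *
          (ω z).real (closedBall x₀ (8 * R)) := by gcongr
    _ = _ := by rw [measureReal_def]; ring

/-- let `Ω ⊂ ℝ²` be bounded open Wiener regular with Green function `g` and
harmonic measure `ω`, and `B̄` a closed ball centered at `∂Ω` with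
`Cap_L((1/4)B̄ \ Ω) ≥ c₁ Cap_L(B̄)`.  Then `g(z,y) ≤ C(c₁) ω^z(8B̄)` for all
`z ∈ Ω \ 2B̄` and `y ∈ (1/5)B̄ ∩ Ω`. -/
theorem stmt_15 (c₁ : ℝ) (hc₁ : 0 < c₁) :
    ∃ C : ℝ, 0 < C ∧
      ∀ (Ω : Set (EuclideanSpace ℝ (Fin 2))), IsOpen Ω → Bornology.IsBounded Ω →
        Ω.Nonempty →
        ∀ ω : EuclideanSpace ℝ (Fin 2) → Measure (EuclideanSpace ℝ (Fin 2)),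
          IsHarmonicMeasureOfWienerRegular Ω ω →
          ∀ (x₀ : EuclideanSpace ℝ (Fin 2)) (R : ℝ), x₀ ∈ frontier Ω → 0 < R →
            c₁ * logCap (closedBall x₀ R) ≤ logCap (closedBall x₀ (R / 4) \ Ω) →
            ∀ z ∈ Ω \ closedBall x₀ (2 * R),
              ∀ y ∈ closedBall x₀ (R / 5) ∩ Ω,
                green ω z y ≤ C * (ω z (closedBall x₀ (8 * R))).toReal := by
  obtain ⟨A, hA, hgreen⟩ := stmt_15_general
  refine ⟨A * (1 + |Real.log c₁|) ^ 2, by positivity,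
    fun Ω hΩ hΩb _ ω hω x₀ R _ hR hcap z hz y hy ↦ ?_⟩
  exact hgreen c₁ hc₁ Ω hΩ hΩb ω hω x₀ R hR _
    (Set.sdiff_subset_sdiff_left (closedBall_subset_closedBall (by linarith))) hcap z hz y
    ⟨closedBall_subset_closedBall (by linarith) hy.1, hy.2⟩
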